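/- Let I be a finite type and ξ an invertible square matrix of type (I,I) with entries in a field K. Then for all i, j ∈ I, ξ⁻¹(i,j) = (det ξ)⁻¹ · ∑_{τ ∈ Perm(I), τ(j) = i} (-1)^{|I| + c(τ)} · ∏_{v ∈ I, v ≠ j} ξ(v, τ(v)), where c(τ) is the number of orbits of τ on I (cycles including fixed points). -/

import Mathlib

attribute [local instance] Classical.propDecidable

/-- The number of orbits of a permutation `σ` on a finite type `I`, i.e. the number of
cycles in the cycle decomposition of `σ`, counting fixed points as cycles of length one. -/
noncomputable def orbitCount {I : Type*} [Fintype I] (σ : Equiv.Perm I) : ℕ :=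
  Multiset.card σ.cycleType + (Fintype.card I - σ.support.card)

theorem sign_eq_neg_one_pow_card_add_orbitCount {I : Type*} [Fintype I] (τ : Equiv.Perm I) :
    Equiv.Perm.sign τ = (-1) ^ (Fintype.card I + orbitCount τ) := by
  have support_le : τ.support.card ≤ Fintype.card I := Finset.card_le_univ _
  rw [Equiv.Perm.sign_of_cycleType, Equiv.Perm.sum_cycleType]
  -- A fixed point counts twice in `|I| + c(τ)`, so only the nontrivial cycles affect its parity.
  have exponent_eq : Fintype.card I + orbitCount τ =
      τ.support.card + Multiset.card τ.cycleType + 2 * (Fintype.card I - τ.support.card) := by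
    rw [orbitCount]
    lia
  rw [exponent_eq, pow_add _ (_ + _), (even_two_mul _).neg_one_pow, mul_one]

section CommRing

variable {I R : Type*} [Fintype I] [CommRing R]

theorem det_updateRow_eq_sum_perm [DecidableEq I] (A : Matrix I I R) (j : I) (b : I → R) :
    (A.updateRow j b).det =
      ∑ τ : Equiv.Perm I, (Equiv.Perm.sign τ : R) *
        (b (τ j) * ∏ v ∈ Finset.univ.erase j, A v (τ v)) := by
  rw [← Matrix.det_transpose, Matrix.det_apply']
  refine Finset.sum_congr rfl fun τ _ => ?_
  have off_row : ∀ v ∈ Finset.univ.erase j, A.updateRow j b v (τ v) = A v (τ v) := fun v hv => by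
    rw [Matrix.updateRow_ne (Finset.ne_of_mem_erase hv)]
  simp only [Matrix.transpose_apply]
  rw [← Finset.mul_prod_erase _ _ (Finset.mem_univ j), Matrix.updateRow_self,
    Finset.prod_congr rfl off_row]

theorem adjugate_apply_eq_sum_perm [DecidableEq I] (A : Matrix I I R) (i j : I) :
    A.adjugate i j =
      ∑ τ : Equiv.Perm I with τ j = i,
        (Equiv.Perm.sign τ : R) * ∏ v ∈ Finset.univ.erase j, A v (τ v) := by
  rw [Matrix.adjugate_apply, det_updateRow_eq_sum_perm, Finset.sum_filter]
  simp only [Pi.single_apply, ite_mul, one_mul, zero_mul, mul_ite, mul_zero]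

theorem stmt2_general (ξ : Matrix I I R) (hξ : IsUnit ξ.det) (i j : I) :
    ξ⁻¹ i j = ↑hξ.unit⁻¹ *
      ∑ τ ∈ Finset.univ.filter (fun τ : Equiv.Perm I => τ j = i),
        (-1 : R) ^ (Fintype.card I + orbitCount τ) *
          ∏ v ∈ Finset.univ.erase j, ξ v (τ v) := by
  have sign_cast (τ : Equiv.Perm I) :
      (Equiv.Perm.sign τ : R) = (-1) ^ (Fintype.card I + orbitCount τ) := by
    simp [sign_eq_neg_one_pow_card_add_orbitCount]
  rw [Matrix.nonsing_inv_apply ξ hξ, Matrix.smul_apply, smul_eq_mul, adjugate_apply_eq_sum_perm]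
  simp only [sign_cast]

end CommRing

theorem stmt2 {I K : Type*} [Fintype I] [Field K] (ξ : Matrix I I K)
    (hξ : IsUnit ξ.det) (i j : I) :
    ξ⁻¹ i j = ξ.det⁻¹ *
      ∑ τ ∈ Finset.univ.filter (fun τ : Equiv.Perm I => τ j = i),
        (-1 : K) ^ (Fintype.card I + orbitCount τ) *
          ∏ v ∈ Finset.univ.erase j, ξ v (τ v) := by
  rw [stmt2_general ξ hξ, Units.val_inv_eq_inv_val, IsUnit.unit_spec]
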